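/- arXiv:2302.00393 — 2 statements merged into one kernel-verified Lean document; each statement's English description precedes it below -/
import Mathlib

section
/- Let A > 0 and define v(t,x) = x/(√2 · √(1+t)) and k(t,x) = (A^2 - x^2/(1+t))/4. Then for all t > 0 and all x with |x| < A√(1+t), the pair (v,k) satisfies the turbulence model with β = 1 and η = κ = 1, namely ∂_t v = ∂_x( k ∂_x v ) and ∂_t k = ∂_x( k ∂_x k ) + k (∂_x v)^2; moreover the energy density ½ v(t,x)^2 + k(t,x) equals the constant A^2/4 on this region. -/
/-!
When `η = κ`, constancy of the energy density `½ v² + k = E` makes the second equation a consequence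
of the first: `k_x = -v v_x`, so for any diffusivity `g`
`(g k_x)_x + g v_x² = -(v g v_x)_x + g v_x² = -v (g v_x)_x = -v v_t = k_t`.
For a velocity `v = a(t) x` and `g = κ k = κ (E - ½ a² x²)`, the first equation becomes the ordinary
differential equation `a' = -κ a³`, which is solved by `a = 1 / √(2 κ (1 + t))`.
-/

open scoped Topology

namespace Turbulence

theorem energy_equation_of_velocity_equation {v k : ℝ → ℝ → ℝ} {g : ℝ → ℝ} {E t x : ℝ}
    (hvt : DifferentiableAt ℝ (fun s ↦ v s x) t) (hvx : Differentiable ℝ (v t))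
    (hflux : DifferentiableAt ℝ (fun z ↦ g z * deriv (v t) z) x)
    (henergy : ∀ᶠ s in 𝓝 t, ∀ z, 1 / 2 * v s z ^ 2 + k s z = E)
    (hvelocity : deriv (fun s ↦ v s x) t = deriv (fun z ↦ g z * deriv (v t) z) x) :
    deriv (fun s ↦ k s x) t
      = deriv (fun z ↦ g z * deriv (k t) z) x + g x * deriv (v t) x ^ 2 := by
  have k_time : deriv (fun s ↦ k s x) t = -(v t x * deriv (fun s ↦ v s x) t) := by
    have hk : (fun s ↦ k s x) =ᶠ[𝓝 t] fun s ↦ E - 1 / 2 * v s x ^ 2 :=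
      henergy.mono fun s hs ↦ eq_sub_of_add_eq' (hs x)
    rw [hk.deriv_eq, (((hvt.hasDerivAt.fun_pow 2).const_mul (1 / 2)).const_sub E).deriv]
    ring
  have k_space (z : ℝ) : deriv (k t) z = -(v t z * deriv (v t) z) := by
    have hk : k t = fun z ↦ E - 1 / 2 * v t z ^ 2 :=
      funext fun z ↦ eq_sub_of_add_eq' (henergy.self_of_nhds z)
    rw [hk, ((((hvx z).hasDerivAt.fun_pow 2).const_mul (1 / 2)).const_sub E).deriv]
    ring
  have k_flux : (fun z ↦ g z * deriv (k t) z) = fun z ↦ -(v t z * (g z * deriv (v t) z)) := by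
    funext z
    rw [k_space]
    ring
  rw [k_time, k_flux, ((hvx x).hasDerivAt.fun_mul hflux.hasDerivAt).fun_neg.deriv, hvelocity]
  ring

theorem hasDerivAt_flux_of_linear {u q : ℝ → ℝ} {a E : ℝ} (hu : ∀ z, u z = a * z)
    (henergy : ∀ z, 1 / 2 * u z ^ 2 + q z = E) (κ x : ℝ) :
    HasDerivAt (fun z ↦ κ * q z * deriv u z) (-(κ * a ^ 3) * x) x := by
  have u_deriv (z : ℝ) : deriv u z = a := by
    rw [funext hu, deriv_const_mul_id]
  have flux : (fun z ↦ κ * q z * deriv u z) = fun z ↦ κ * a * E - κ * a ^ 3 / 2 * z ^ 2 := by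
    funext z
    rw [u_deriv, ← henergy z, hu]
    ring
  rw [flux]
  exact (((hasDerivAt_pow 2 x).const_mul _).const_sub _).congr_deriv (by ring)

theorem linear_velocity_solution {v k : ℝ → ℝ → ℝ} {a : ℝ → ℝ} {κ E t : ℝ}
    (hv : ∀ s z, v s z = a s * z) (ha : HasDerivAt a (-(κ * a t ^ 3)) t)
    (henergy : ∀ᶠ s in 𝓝 t, ∀ z, 1 / 2 * v s z ^ 2 + k s z = E) (x : ℝ) :
    deriv (fun s ↦ v s x) t = deriv (fun z ↦ κ * k t z * deriv (v t) z) x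
      ∧ deriv (fun s ↦ k s x) t
        = deriv (fun z ↦ κ * k t z * deriv (k t) z) x + κ * k t x * deriv (v t) x ^ 2 := by
  have v_time : HasDerivAt (fun s ↦ v s x) (-(κ * a t ^ 3) * x) t := by
    simpa only [hv] using ha.mul_const x
  have v_space : Differentiable ℝ (v t) := by
    rw [funext (hv t)]
    fun_prop
  have v_flux := hasDerivAt_flux_of_linear (hv t) henergy.self_of_nhds κ x
  have velocity := v_time.deriv.trans v_flux.deriv.symm
  exact ⟨velocity, energy_equation_of_velocity_equation v_time.differentiableAt v_space
    v_flux.differentiableAt henergy velocity⟩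

theorem hasDerivAt_inv_sqrt_mul_sqrt {κ t : ℝ} (hκ : 0 < κ) (ht : -1 < t) :
    HasDerivAt (fun s ↦ (√(2 * κ) * √(1 + s))⁻¹) (-(κ * (√(2 * κ) * √(1 + t))⁻¹ ^ 3)) t := by
  have time_pos : 0 < 1 + t := by linarith
  have sq_sqrt_κ : √(2 * κ) ^ 2 = 2 * κ := Real.sq_sqrt (by positivity)
  have sqrt_deriv : HasDerivAt (fun s ↦ √(1 + s)) (1 / (2 * √(1 + t))) t :=
    ((hasDerivAt_id t).const_add 1).sqrt time_pos.ne'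
  refine ((sqrt_deriv.const_mul √(2 * κ)).fun_inv (by positivity)).congr_deriv ?_
  field_simp
  rw [sq_sqrt_κ]

theorem energy_density_eq {κ t : ℝ} (hκ : 0 < κ) (ht : -1 < t) (A x : ℝ) :
    1 / 2 * (x / (√(2 * κ) * √(1 + t))) ^ 2 + (A ^ 2 - x ^ 2 / (1 + t)) / (4 * κ)
      = A ^ 2 / (4 * κ) := by
  have time_pos : 0 < 1 + t := by linarith
  rw [div_pow, mul_pow, Real.sq_sqrt (by positivity), Real.sq_sqrt time_pos.le]
  field_simp
  ring

end Turbulence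

theorem turbulence_exact_self_similar_solution_general
    (A : ℝ) {κ : ℝ} (hκ : 0 < κ)
    (v k : ℝ → ℝ → ℝ)
    (hv : ∀ t x : ℝ, v t x = x / (√(2 * κ) * √(1 + t)))
    (hk : ∀ t x : ℝ, k t x = (A ^ 2 - x ^ 2 / (1 + t)) / (4 * κ))
    {t : ℝ} (ht : -1 < t) (x : ℝ) :
    deriv (fun s ↦ v s x) t = deriv (fun z ↦ κ * k t z * deriv (v t) z) x
      ∧ deriv (fun s ↦ k s x) t
        = deriv (fun z ↦ κ * k t z * deriv (k t) z) x + κ * k t x * deriv (v t) x ^ 2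
      ∧ 1 / 2 * v t x ^ 2 + k t x = A ^ 2 / (4 * κ) := by
  have energy (s : ℝ) (hs : -1 < s) (z : ℝ) : 1 / 2 * v s z ^ 2 + k s z = A ^ 2 / (4 * κ) := by
    rw [hv, hk, Turbulence.energy_density_eq hκ hs]
  have linear (s z : ℝ) : v s z = (√(2 * κ) * √(1 + s))⁻¹ * z := by
    rw [hv, div_eq_inv_mul]
  obtain ⟨velocity_eq, energy_eq⟩ := Turbulence.linear_velocity_solution linear
    (Turbulence.hasDerivAt_inv_sqrt_mul_sqrt hκ ht) ((lt_mem_nhds ht).mono energy) x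
  exact ⟨velocity_eq, energy_eq, energy t ht x⟩

/-- The explicit pair `v(t,x) = x/(√2 √(1+t))`, `k(t,x) = (A² - x²/(1+t))/4`
solves the turbulence model with `β = 1`, `η = κ = 1` on the region
`|x| < A √(1+t)`, and there the energy density `½ v² + k` equals `A²/4`. -/
theorem turbulence_exact_self_similar_solution
    (A : ℝ) (hA : 0 < A)
    (v k : ℝ → ℝ → ℝ)
    (hv : ∀ t x : ℝ, v t x = x / (Real.sqrt 2 * Real.sqrt (1 + t)))
    (hk : ∀ t x : ℝ, k t x = (A ^ 2 - x ^ 2 / (1 + t)) / 4) :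
    ∀ t : ℝ, 0 < t → ∀ x : ℝ, |x| < A * Real.sqrt (1 + t) →
      (deriv (fun s : ℝ => v s x) t
          = deriv (fun z : ℝ => k t z * deriv (fun w : ℝ => v t w) z) x)
      ∧ (deriv (fun s : ℝ => k s x) t
          = deriv (fun z : ℝ => k t z * deriv (fun w : ℝ => k t w) z) x
            + k t x * (deriv (fun w : ℝ => v t w) x) ^ 2)
      ∧ (1 / 2) * (v t x) ^ 2 + k t x = A ^ 2 / 4 := by
  intro t ht x _
  simpa only [mul_one, one_mul] using turbulence_exact_self_similar_solution_general A one_pos v k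
    (by simpa only [mul_one] using hv) (by simpa only [mul_one] using hk) (by linarith : -1 < t) x
end

section
/- Let d_1, d_2, d_3 > 0. Define s: ℝ^2 → ℝ by s(u_1,u_2) = √( (1+u_1+u_2)^2 - 4 u_1 u_2 ) when u_1 ≥ 0 and u_2 ≥ 0, and s(u_1,u_2) = 1 + u_1 + u_2 otherwise, and define A: ℝ^2 → ℝ^2 by A(u) = ½( (d_1+d_3) u_1 + (d_3-d_1)(1 + u_2 - s(u)), (d_2+d_3) u_2 + (d_3-d_2)(1 + u_1 - s(u)) ). Then A is strongly monotone, i.e. there exists a > 0 with ⟨A(u) - A(ũ), u - ũ⟩ ≥ a ‖u - ũ‖^2 for all u, ũ ∈ ℝ^2, if and only if (3 - 2√2) d_3 < d_j < (3 + 2√2) d_3 for j = 1, 2. -/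
/-!
For a displacement `(h, k)`, put `δ = s u - s ũ`. The pairing `⟨A u - A ũ, u - ũ⟩` is affine in
`δ`. The gradient of `s` takes its values in the triangle with vertices `(1, 1)`, `(1, -1)`,
`(-1, 1)`, and all three vertices are approached, so the closed convex hull of the possible values
of `δ` is that of `h + k`, `h - k`, `k - h`. Strong monotonicity with constant `a` therefore says
that the pairing is at least `a (h² + k²)` at these three values of `δ`, where it equals
`d₁ h² + d₂ k²`, `d₁ h² + (d₃ - d₁) h k + d₃ k²` and `d₂ k² + (d₃ - d₂) k h + d₃ h²`.
The last two bounds imply the first, and they hold for some `a > 0` exactly when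
`(d₃ - d_j)² < 4 d_j d₃` for `j = 1, 2`.
-/

open Filter Topology

/-- The function `s` of the reaction equilibria: on the closed quadrant, `Ψ` has third component
`(1 + x + y - s x y) / 2`. Elsewhere `s` is continued by the value making this component vanish. -/
noncomputable def equilibriumRoot (x y : ℝ) : ℝ :=
  if 0 ≤ x ∧ 0 ≤ y then Real.sqrt ((1 + x + y) ^ 2 - 4 * x * y) else 1 + x + y

/-- The increments of a function along `(h, k)` for the constant gradients `(1, 1)`, `(1, -1)` and
`(-1, 1)`, the extreme points of the convex hull of the gradients of `equilibriumRoot`. -/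
def extremalIncrements (h k : ℝ) : Set ℝ := {h + k, h - k, k - h}

/-- The pairing `⟨A u - A ũ, u - ũ⟩` for the flux `A`, as a function of `(h, k) = u - ũ` and
`δ = s u - s ũ`. -/
noncomputable def fluxPairing (d₁ d₂ d₃ h k δ : ℝ) : ℝ :=
  ((d₁ + d₃) * h + (d₃ - d₁) * (k - δ)) / 2 * h + ((d₂ + d₃) * k + (d₃ - d₂) * (h - δ)) / 2 * k

/-- Coercivity of the binary quadratic form `α x² + β x y + γ y²`. -/
def IsCoerciveForm (α β γ : ℝ) : Prop :=
  ∃ a, 0 < a ∧ ∀ x y : ℝ, a * (x ^ 2 + y ^ 2) ≤ α * x ^ 2 + β * x * y + γ * y ^ 2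

lemma equilibriumRoot_comm (x y : ℝ) : equilibriumRoot x y = equilibriumRoot y x := by
  simp only [equilibriumRoot, and_comm, add_right_comm, mul_right_comm]

lemma equilibriumRoot_of_neg_left {x : ℝ} (hx : x < 0) (y : ℝ) :
    equilibriumRoot x y = 1 + x + y :=
  if_neg fun h => hx.not_ge h.1

lemma equilibriumRoot_le (x y : ℝ) : equilibriumRoot x y ≤ 1 + x + y := by
  unfold equilibriumRoot
  split_ifs with h
  · obtain ⟨hx, hy⟩ := h
    exact Real.sqrt_le_iff.mpr ⟨by positivity, by linarith [mul_nonneg hx hy]⟩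
  · exact le_rfl

lemma equilibriumRoot_eq_sqrt {x y : ℝ} (hx : 0 ≤ x) (hy : 0 ≤ y) :
    equilibriumRoot x y = Real.sqrt (1 + 2 * (x + y) + |x - y| ^ 2) := by
  rw [equilibriumRoot, if_pos ⟨hx, hy⟩, sq_abs]
  ring_nf

lemma equilibriumRoot_sq {x y : ℝ} (hx : 0 ≤ x) (hy : 0 ≤ y) :
    equilibriumRoot x y ^ 2 = 1 + 2 * (x + y) + |x - y| ^ 2 := by
  rw [equilibriumRoot_eq_sqrt hx hy, Real.sq_sqrt (by positivity)]

lemma one_add_abs_sub_le_equilibriumRoot {x y : ℝ} (hx : 0 ≤ x) (hy : 0 ≤ y) :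
    1 + |x - y| ≤ equilibriumRoot x y := by
  have abs_le_add : |x - y| ≤ x + y := abs_le.mpr ⟨by linarith, by linarith⟩
  rw [equilibriumRoot_eq_sqrt hx hy]
  exact Real.le_sqrt_of_sq_le (by linarith)

lemma add_le_abs_sub {x y : ℝ} (h : ¬(0 ≤ x ∧ 0 ≤ y)) : x + y ≤ |x - y| := by
  rcases not_and_or.mp h with hx | hy
  · exact le_trans (by linarith) (neg_le_abs (x - y))
  · exact le_trans (by linarith) (le_abs_self (x - y))

lemma equilibriumRoot_le_add {x y x' y' m : ℝ} (hm : 0 ≤ m) (hsum : x + y ≤ x' + y' + m)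
    (hdiff : |x - y| ≤ |x' - y'| + m) :
    equilibriumRoot x y ≤ equilibriumRoot x' y' + m := by
  by_cases hv : 0 ≤ x' ∧ 0 ≤ y'
  · have hroot := one_add_abs_sub_le_equilibriumRoot hv.1 hv.2
    by_cases hu : 0 ≤ x ∧ 0 ≤ y
    · refine le_of_sq_le_sq ?_ (by linarith [abs_nonneg (x' - y')])
      calc equilibriumRoot x y ^ 2 = 1 + 2 * (x + y) + |x - y| ^ 2 := equilibriumRoot_sq hu.1 hu.2
        _ ≤ 1 + 2 * (x' + y' + m) + (|x' - y'| + m) ^ 2 := by gcongr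
        _ = equilibriumRoot x' y' ^ 2 + 2 * m * (1 + |x' - y'|) + m ^ 2 := by
          rw [equilibriumRoot_sq hv.1 hv.2]
          ring
        _ ≤ equilibriumRoot x' y' ^ 2 + 2 * m * equilibriumRoot x' y' + m ^ 2 := by gcongr
        _ = (equilibriumRoot x' y' + m) ^ 2 := by ring
    · linarith [equilibriumRoot_le x y, add_le_abs_sub hu]
  · have hroot : equilibriumRoot x' y' = 1 + x' + y' := if_neg hv
    linarith [equilibriumRoot_le x y]

lemma exists_equilibriumRoot_sub_le (x y h k : ℝ) :
    ∃ p ∈ extremalIncrements h k, equilibriumRoot (x + h) (y + k) - equilibriumRoot x y ≤ p := by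
  have increment_le : equilibriumRoot (x + h) (y + k) - equilibriumRoot x y ≤
      max (h + k) |h - k| := by
    refine sub_le_iff_le_add'.mpr (equilibriumRoot_le_add ?_ ?_ ?_)
    · exact (abs_nonneg _).trans (le_max_right _ _)
    · linarith [le_max_left (h + k) |h - k|]
    · calc |x + h - (y + k)| = |(x - y) + (h - k)| := by ring_nf
        _ ≤ |x - y| + |h - k| := abs_add_le _ _
        _ ≤ |x - y| + max (h + k) |h - k| := by gcongr; exact le_max_right _ _
  rw [le_max_iff, le_abs, neg_sub] at increment_le
  simpa [extremalIncrements] using increment_le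

lemma neg_mem_extremalIncrements {h k p : ℝ} (hp : p ∈ extremalIncrements (-h) (-k)) :
    -p ∈ extremalIncrements h k := by
  rcases hp with rfl | rfl | rfl
  · exact .inl (by ring)
  · exact .inr (.inl (by ring))
  · exact .inr (.inr (by simp only [Set.mem_singleton_iff]; ring))

lemma exists_le_equilibriumRoot_sub (x y h k : ℝ) :
    ∃ p ∈ extremalIncrements h k, p ≤ equilibriumRoot (x + h) (y + k) - equilibriumRoot x y := by
  obtain ⟨p, hp, hle⟩ := exists_equilibriumRoot_sub_le (x + h) (y + k) (-h) (-k)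
  rw [add_neg_cancel_right, add_neg_cancel_right] at hle
  exact ⟨-p, neg_mem_extremalIncrements hp, by linarith⟩

lemma equilibriumRoot_sub_mem_convexHull (x y h k : ℝ) :
    equilibriumRoot (x + h) (y + k) - equilibriumRoot x y ∈
      convexHull ℝ (extremalIncrements h k) := by
  obtain ⟨p, hp, hle⟩ := exists_le_equilibriumRoot_sub x y h k
  obtain ⟨q, hq, hge⟩ := exists_equilibriumRoot_sub_le x y h k
  exact (convex_convexHull ℝ _).ordConnected.out (subset_convexHull ℝ _ hp)
    (subset_convexHull ℝ _ hq) ⟨hle, hge⟩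

lemma tendsto_equilibriumRoot_sub_atTop {y : ℝ} (hy : 0 ≤ y) :
    Tendsto (fun x => equilibriumRoot x y - x) atTop (𝓝 (1 - y)) := by
  have upper_tendsto : Tendsto (fun x : ℝ => 1 - y + 2 * y / (1 - y + x)) atTop (𝓝 (1 - y)) := by
    simpa using (tendsto_const_nhds (x := 1 - y)).add
      ((tendsto_atTop_add_const_left atTop (1 - y) tendsto_id).const_div_atTop (2 * y))
  refine tendsto_of_tendsto_of_tendsto_of_le_of_le' tendsto_const_nhds upper_tendsto ?_ ?_
  all_goals filter_upwards [eventually_ge_atTop y] with x hx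
  · have := one_add_abs_sub_le_equilibriumRoot (hy.trans hx) hy
    rw [abs_of_nonneg (sub_nonneg.mpr hx)] at this
    linarith
  · -- `s² = r² + 4 y ≤ (r + 2 y / r)²` for `r = 1 - y + x`
    have hr : 0 < 1 - y + x := by linarith
    have hmul : 2 * y / (1 - y + x) * (1 - y + x) = 2 * y := div_mul_cancel₀ _ hr.ne'
    have hsq := equilibriumRoot_sq (hy.trans hx) hy
    rw [sq_abs] at hsq
    have : equilibriumRoot x y ≤ 1 - y + x + 2 * y / (1 - y + x) := by
      refine le_of_sq_le_sq ?_ (by positivity)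
      linarith [sq_nonneg (2 * y / (1 - y + x))]
    linarith

lemma tendsto_equilibriumRoot_increment {y k : ℝ} (h : ℝ) (hy : 0 ≤ y) (hyk : 0 ≤ y + k) :
    Tendsto (fun x => equilibriumRoot (x + h) (y + k) - equilibriumRoot x y) atTop
      (𝓝 (h - k)) := by
  have shifted : Tendsto (fun x => equilibriumRoot (x + h) (y + k) - (x + h)) atTop
      (𝓝 (1 - (y + k))) :=
    (tendsto_equilibriumRoot_sub_atTop hyk).comp (tendsto_atTop_add_const_right atTop h tendsto_id)
  convert (shifted.sub (tendsto_equilibriumRoot_sub_atTop hy)).add_const h using 2 <;> ring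

lemma forall_equilibriumRoot_sub_mem_iff {C : Set ℝ} (hconv : Convex ℝ C) (hclosed : IsClosed C)
    (h k : ℝ) :
    (∀ x y, equilibriumRoot (x + h) (y + k) - equilibriumRoot x y ∈ C) ↔
      extremalIncrements h k ⊆ C := by
  refine ⟨fun hmem => ?_, fun hsub x y =>
    convexHull_min hsub hconv (equilibriumRoot_sub_mem_convexHull x y h k)⟩
  rintro _ (rfl | rfl | rfl)
  · have hneg : -(|h| + 1) < 0 := by linarith [abs_nonneg h]
    have hneg' : -(|h| + 1) + h < 0 := by linarith [le_abs_self h]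
    convert hmem (-(|h| + 1)) 0 using 1
    rw [equilibriumRoot_of_neg_left hneg, equilibriumRoot_of_neg_left hneg']
    ring
  · exact hclosed.mem_of_tendsto
      (tendsto_equilibriumRoot_increment h (abs_nonneg k) (by linarith [neg_abs_le k]))
      (.of_forall fun x => hmem x |k|)
  · refine hclosed.mem_of_tendsto
      (tendsto_equilibriumRoot_increment k (abs_nonneg h) (by linarith [neg_abs_le h]))
      (.of_forall fun y => ?_)
    rw [equilibriumRoot_comm (y + k), equilibriumRoot_comm y]
    exact hmem |h| y

lemma fluxPairing_add (d₁ d₂ d₃ h k : ℝ) :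
    fluxPairing d₁ d₂ d₃ h k (h + k) = d₁ * h ^ 2 + d₂ * k ^ 2 := by
  unfold fluxPairing
  ring

lemma fluxPairing_sub (d₁ d₂ d₃ h k : ℝ) :
    fluxPairing d₁ d₂ d₃ h k (h - k) = d₁ * h ^ 2 + (d₃ - d₁) * h * k + d₃ * k ^ 2 := by
  unfold fluxPairing
  ring

lemma fluxPairing_swap (d₁ d₂ d₃ h k δ : ℝ) :
    fluxPairing d₁ d₂ d₃ h k δ = fluxPairing d₂ d₁ d₃ k h δ :=
  add_comm _ _

lemma convex_setOf_le_fluxPairing (d₁ d₂ d₃ h k b : ℝ) :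
    Convex ℝ {δ | b ≤ fluxPairing d₁ d₂ d₃ h k δ} := by
  intro δ hδ ε hε s t hs ht hst
  calc b = s * b + t * b := by rw [← add_mul, hst, one_mul]
    _ ≤ s * fluxPairing d₁ d₂ d₃ h k δ + t * fluxPairing d₁ d₂ d₃ h k ε :=
      add_le_add (mul_le_mul_of_nonneg_left hδ hs) (mul_le_mul_of_nonneg_left hε ht)
    _ = fluxPairing d₁ d₂ d₃ h k (s • δ + t • ε) := by
      obtain rfl := eq_sub_of_add_eq hst
      simp only [fluxPairing, smul_eq_mul]
      ring

lemma isClosed_setOf_le_fluxPairing (d₁ d₂ d₃ h k b : ℝ) :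
    IsClosed {δ | b ≤ fluxPairing d₁ d₂ d₃ h k δ} :=
  isClosed_le continuous_const (by unfold fluxPairing; fun_prop)

lemma forall_extremalIncrements_le_fluxPairing_iff (d₁ d₂ d₃ a : ℝ) :
    (∀ h k, ∀ δ ∈ extremalIncrements h k,
      a * (h ^ 2 + k ^ 2) ≤ fluxPairing d₁ d₂ d₃ h k δ) ↔
    (∀ h k : ℝ, a * (h ^ 2 + k ^ 2) ≤ d₁ * h ^ 2 + (d₃ - d₁) * h * k + d₃ * k ^ 2) ∧
      ∀ h k : ℝ, a * (h ^ 2 + k ^ 2) ≤ d₂ * h ^ 2 + (d₃ - d₂) * h * k + d₃ * k ^ 2 := by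
  constructor
  · refine fun hextremal => ⟨fun h k => ?_, fun h k => ?_⟩
    · rw [← fluxPairing_sub d₁ d₂]
      exact hextremal h k _ (.inr (.inl rfl))
    · rw [← fluxPairing_sub d₂ d₁, fluxPairing_swap, add_comm (h ^ 2)]
      exact hextremal k h _ (.inr (.inr rfl))
  · rintro ⟨hform₁, hform₂⟩ h k _ (rfl | rfl | rfl)
    · have ha₁ : a ≤ d₁ := by simpa using hform₁ 1 0
      have ha₂ : a ≤ d₂ := by simpa using hform₂ 1 0
      rw [fluxPairing_add, mul_add]
      gcongr
    · rw [fluxPairing_sub]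
      exact hform₁ h k
    · rw [fluxPairing_swap, fluxPairing_sub, add_comm (h ^ 2)]
      exact hform₂ k h

lemma forall_le_fluxPairing_iff (d₁ d₂ d₃ a : ℝ) :
    (∀ x y x' y' : ℝ, a * ((x - x') ^ 2 + (y - y') ^ 2) ≤
      fluxPairing d₁ d₂ d₃ (x - x') (y - y') (equilibriumRoot x y - equilibriumRoot x' y')) ↔
    (∀ h k : ℝ, a * (h ^ 2 + k ^ 2) ≤ d₁ * h ^ 2 + (d₃ - d₁) * h * k + d₃ * k ^ 2) ∧
      ∀ h k : ℝ, a * (h ^ 2 + k ^ 2) ≤ d₂ * h ^ 2 + (d₃ - d₂) * h * k + d₃ * k ^ 2 := by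
  have increments_iff (h k : ℝ) := forall_equilibriumRoot_sub_mem_iff
    (convex_setOf_le_fluxPairing d₁ d₂ d₃ h k (a * (h ^ 2 + k ^ 2)))
    (isClosed_setOf_le_fluxPairing d₁ d₂ d₃ h k (a * (h ^ 2 + k ^ 2))) h k
  rw [← forall_extremalIncrements_le_fluxPairing_iff]
  constructor
  · refine fun hmono h k => (increments_iff h k).mp fun x y => ?_
    simpa only [Set.mem_ofPred_eq, add_sub_cancel_left] using hmono (x + h) (y + k) x y
  · intro hextremal x y x' y'
    simpa only [Set.mem_ofPred_eq, add_sub_cancel] using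
      (increments_iff (x - x') (y - y')).mpr (hextremal _ _) x' y'

lemma exists_pos_forall_le_fluxPairing_iff (d₁ d₂ d₃ : ℝ) :
    (∃ a, 0 < a ∧ ∀ x y x' y' : ℝ, a * ((x - x') ^ 2 + (y - y') ^ 2) ≤
      fluxPairing d₁ d₂ d₃ (x - x') (y - y') (equilibriumRoot x y - equilibriumRoot x' y')) ↔
    IsCoerciveForm d₁ (d₃ - d₁) d₃ ∧ IsCoerciveForm d₂ (d₃ - d₂) d₃ := by
  simp only [forall_le_fluxPairing_iff]
  constructor
  · rintro ⟨a, ha, hform₁, hform₂⟩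
    exact ⟨⟨a, ha, hform₁⟩, ⟨a, ha, hform₂⟩⟩
  · rintro ⟨⟨a₁, ha₁, hform₁⟩, ⟨a₂, ha₂, hform₂⟩⟩
    refine ⟨min a₁ a₂, lt_min ha₁ ha₂, fun h k => ?_, fun h k => ?_⟩
    · exact le_trans (by gcongr; exact min_le_left _ _) (hform₁ h k)
    · exact le_trans (by gcongr; exact min_le_right _ _) (hform₂ h k)

lemma isCoerciveForm_iff (α β γ : ℝ) : IsCoerciveForm α β γ ↔ 0 < α ∧ discrim α β γ < 0 := by
  constructor
  · rintro ⟨a, ha, hform⟩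
    have hα : 0 < α := ha.trans_le (by simpa using hform 1 0)
    refine ⟨hα, discrim_lt_zero hα.ne' fun x => ?_⟩
    calc 0 < a * (x ^ 2 + 1 ^ 2) := by positivity
      _ ≤ α * x ^ 2 + β * x * 1 + γ * 1 ^ 2 := hform x 1
      _ = α * (x * x) + β * x + γ := by ring
  · rintro ⟨hα, hdisc⟩
    have hdet : 0 < α * γ - (β / 2) ^ 2 := by
      unfold discrim at hdisc
      linarith
    have hγ : 0 < γ := pos_of_mul_pos_right (by linarith [sq_nonneg (β / 2)]) hα.le
    -- The smaller eigenvalue is at least the determinant divided by the trace.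
    refine ⟨(α * γ - (β / 2) ^ 2) / (α + γ), by positivity, fun x y => ?_⟩
    rw [div_mul_eq_mul_div, div_le_iff₀ (by positivity)]
    linarith [sq_nonneg (α * x + β / 2 * y), sq_nonneg (β / 2 * x + γ * y)]

lemma discrim_sub_neg_iff {d e : ℝ} (he : 0 < e) :
    discrim d (e - d) e < 0 ↔ (3 - 2 * Real.sqrt 2) * e < d ∧ d < (3 + 2 * Real.sqrt 2) * e := by
  have discrim_eq : discrim d (e - d) e = (d - 3 * e) ^ 2 - (2 * Real.sqrt 2 * e) ^ 2 := by
    rw [discrim, mul_pow, mul_pow, Real.sq_sqrt zero_le_two]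
    ring
  rw [discrim_eq, sub_neg, sq_lt_sq, abs_of_pos (show 0 < 2 * Real.sqrt 2 * e by positivity),
    abs_sub_lt_iff, sub_mul, add_mul]
  constructor <;> rintro ⟨_, _⟩ <;> constructor <;> linarith

/-- For the reaction `X₃ ⇌ X₁ + X₂`, the reduced flux map `A = Q D Ψ` on `ℝ²`
is strongly monotone if and only if `(3 - 2√2) d₃ < d_j < (3 + 2√2) d₃` for
`j = 1, 2`. -/
theorem three_species_flux_monotone_iff
    (d₁ d₂ d₃ : ℝ) (hd₁ : 0 < d₁) (hd₂ : 0 < d₂) (hd₃ : 0 < d₃)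
    (s : ℝ → ℝ → ℝ)
    (hs : ∀ u₁ u₂ : ℝ, s u₁ u₂ =
      if 0 ≤ u₁ ∧ 0 ≤ u₂ then Real.sqrt ((1 + u₁ + u₂) ^ 2 - 4 * u₁ * u₂)
      else 1 + u₁ + u₂)
    (A₁ A₂ : ℝ → ℝ → ℝ)
    (hA₁ : ∀ u₁ u₂ : ℝ, A₁ u₁ u₂ =
      ((d₁ + d₃) * u₁ + (d₃ - d₁) * (1 + u₂ - s u₁ u₂)) / 2)
    (hA₂ : ∀ u₁ u₂ : ℝ, A₂ u₁ u₂ =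
      ((d₂ + d₃) * u₂ + (d₃ - d₂) * (1 + u₁ - s u₁ u₂)) / 2) :
    (∃ a : ℝ, 0 < a ∧ ∀ u₁ u₂ v₁ v₂ : ℝ,
        (A₁ u₁ u₂ - A₁ v₁ v₂) * (u₁ - v₁) + (A₂ u₁ u₂ - A₂ v₁ v₂) * (u₂ - v₂)
          ≥ a * ((u₁ - v₁) ^ 2 + (u₂ - v₂) ^ 2))
    ↔ ((3 - 2 * Real.sqrt 2) * d₃ < d₁ ∧ d₁ < (3 + 2 * Real.sqrt 2) * d₃
        ∧ (3 - 2 * Real.sqrt 2) * d₃ < d₂ ∧ d₂ < (3 + 2 * Real.sqrt 2) * d₃) := by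
  obtain rfl : s = equilibriumRoot := funext₂ hs
  have pairing_eq (u₁ u₂ v₁ v₂ : ℝ) :
      (A₁ u₁ u₂ - A₁ v₁ v₂) * (u₁ - v₁) + (A₂ u₁ u₂ - A₂ v₁ v₂) * (u₂ - v₂) =
        fluxPairing d₁ d₂ d₃ (u₁ - v₁) (u₂ - v₂)
          (equilibriumRoot u₁ u₂ - equilibriumRoot v₁ v₂) := by
    rw [hA₁, hA₁, hA₂, hA₂, fluxPairing]
    ring
  simp only [pairing_eq, ge_iff_le]
  rw [exists_pos_forall_le_fluxPairing_iff, isCoerciveForm_iff, isCoerciveForm_iff,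
    and_iff_right hd₁, and_iff_right hd₂, discrim_sub_neg_iff hd₃, discrim_sub_neg_iff hd₃,
    and_assoc]
end
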